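/- arXiv:2308.11420 — 4 statements merged into one kernel-verified Lean document; each statement's English description precedes it below -/
import Mathlib

section
/- Let K > 0 and let c : ℝ → ℝ be convex, strictly increasing and differentiable on [0, ∞) with c(0) ≥ 0. Define the modified cost ĉ(s) = (1 + s/K)·c(s) − (1/K)·∫₀^s c(x) dx. Then for every s ≥ 0 one has c(s) ≤ ĉ(s) ≤ (1 + s/K)·c(s). -/
open MeasureTheory Set

theorem integral_le_sub_mul_of_monotoneOn {f : ℝ → ℝ} {a b : ℝ} (hab : a ≤ b)
    (hf : MonotoneOn f (Icc a b)) : ∫ x in a..b, f x ≤ (b - a) * f b := by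
  have hint : IntervalIntegrable f volume a b :=
    MonotoneOn.intervalIntegrable (by rwa [uIcc_of_le hab])
  calc ∫ x in a..b, f x ≤ ∫ _ in a..b, f b :=
        intervalIntegral.integral_mono_on hab hint intervalIntegrable_const
          fun x hx ↦ hf hx (right_mem_Icc.2 hab) hx.2
    _ = (b - a) * f b := by rw [intervalIntegral.integral_const, smul_eq_mul]

/-- The modified cost `ĉ` of a generator with true cost `c`, where `K` is the market parameter
`(|N_g| - 2) * D`. It is meaningful only for `K ≠ 0`. -/
noncomputable def modifiedCost (K : ℝ) (c : ℝ → ℝ) (s : ℝ) : ℝ :=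
  (1 + s / K) * c s - (1 / K) * ∫ x in (0 : ℝ)..s, c x

section modifiedCost

variable {K s : ℝ} {c : ℝ → ℝ}

theorem modifiedCost_eq_add_div (K : ℝ) (c : ℝ → ℝ) (s : ℝ) :
    modifiedCost K c s = c s + (s * c s - ∫ x in (0 : ℝ)..s, c x) / K := by
  rw [modifiedCost]
  ring

theorem le_modifiedCost_of_monotoneOn (hK : 0 < K) (hs : 0 ≤ s) (hc : MonotoneOn c (Icc 0 s)) :
    c s ≤ modifiedCost K c s := by
  have hintegral : ∫ x in (0 : ℝ)..s, c x ≤ s * c s := by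
    simpa only [sub_zero] using integral_le_sub_mul_of_monotoneOn hs hc
  rw [modifiedCost_eq_add_div]
  exact le_add_of_nonneg_right (div_nonneg (sub_nonneg.2 hintegral) hK.le)

theorem modifiedCost_le_of_nonneg (hK : 0 < K) (hs : 0 ≤ s) (hc : ∀ x ∈ Icc 0 s, 0 ≤ c x) :
    modifiedCost K c s ≤ (1 + s / K) * c s :=
  sub_le_self _ (mul_nonneg (one_div_nonneg.2 hK.le) (intervalIntegral.integral_nonneg hs hc))

theorem modified_cost_sandwich_general (hK : 0 < K) (hs : 0 ≤ s) (hmono : MonotoneOn c (Icc 0 s))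
    (hc0 : 0 ≤ c 0) : c s ≤ modifiedCost K c s ∧ modifiedCost K c s ≤ (1 + s / K) * c s :=
  ⟨le_modifiedCost_of_monotoneOn hK hs hmono,
    modifiedCost_le_of_nonneg hK hs fun _ hx ↦ hc0.trans (hmono (left_mem_Icc.2 hs) hx hx.1)⟩

end modifiedCost

/-- The sandwich inequality relating a generator's true cost `c` to its modified cost
`ĉ(s) = (1 + s/K)·c(s) − (1/K)·∫₀^s c(x) dx`: for every `s ≥ 0`,
`c(s) ≤ ĉ(s) ≤ (1 + s/K)·c(s)`. -/
theorem modified_cost_sandwich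
    (K : ℝ) (hK : 0 < K) (c : ℝ → ℝ)
    (hconv : ConvexOn ℝ (Set.Ici (0 : ℝ)) c)
    (hmono : StrictMonoOn c (Set.Ici (0 : ℝ)))
    (hdiff : DifferentiableOn ℝ c (Set.Ici (0 : ℝ)))
    (hc0 : 0 ≤ c 0)
    (chat : ℝ → ℝ)
    (hchat : ∀ s, chat s = (1 + s / K) * c s - (1 / K) * ∫ x in (0:ℝ)..s, c x) :
    ∀ s, 0 ≤ s → c s ≤ chat s ∧ chat s ≤ (1 + s / K) * c s := by
  intro s hs
  rw [hchat s]
  exact modified_cost_sandwich_general hK hs (hmono.monotoneOn.mono Icc_subset_Ici_self) hc0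
end

section
/- Let K > 0 and let c : ℝ → ℝ be convex, strictly increasing and differentiable on [0, ∞). Define ĉ(s) = (1 + s/K)·c(s) − (1/K)·∫₀^s c(x) dx. Then ĉ is strictly convex and strictly increasing on [0, ∞). -/
/-!
For `s` and `t` in the domain of `c`,
`ĉ(t) - ĉ(s) = (1 + s/K) (c(t) - c(s)) + (1/K) ∫ₛᵗ (c(t) - c(x)) dx`,
and the integral is positive for all `t ≠ s`, on either side of `s`, because `c` is strictly
increasing. So the increments of `ĉ` from `s` strictly exceed those of `(1 + s/K) c`, a nonnegative
multiple of a convex increasing function. Taking `s < t` gives strict monotonicity; averaging the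
increments from `s = a x + b y` to `x` and to `y` gives strict convexity.
-/

open MeasureTheory Set

theorem integral_sub_pos_of_strictMonoOn {c : ℝ → ℝ} {s t : ℝ}
    (hc : StrictMonoOn c (uIcc s t)) (hst : s ≠ t) : 0 < ∫ x in s..t, (c t - c x) := by
  have hint : IntervalIntegrable c volume s t := hc.monotoneOn.intervalIntegrable
  rcases hst.lt_or_gt with hlt | hgt
  · refine intervalIntegral.intervalIntegral_pos_of_pos_on
      (intervalIntegrable_const.sub hint) (fun x hx => sub_pos.2 ?_) hlt
    rw [uIcc_of_le hlt.le] at hc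
    exact hc (Ioo_subset_Icc_self hx) (right_mem_Icc.2 hlt.le) hx.2
  · have hflip : ∫ x in s..t, (c t - c x) = ∫ x in t..s, (c x - c t) := by
      rw [intervalIntegral.integral_symm, ← intervalIntegral.integral_neg]
      simp only [neg_sub]
    rw [hflip]
    refine intervalIntegral.intervalIntegral_pos_of_pos_on
      (hint.symm.sub intervalIntegrable_const) (fun x hx => sub_pos.2 ?_) hgt
    rw [uIcc_of_ge hgt.le] at hc
    exact hc (left_mem_Icc.2 hgt.le) (Ioo_subset_Icc_self hx) hx.1

theorem modifiedCost_sub_modifiedCost (K : ℝ) {c : ℝ → ℝ} {s t : ℝ}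
    (hs : IntervalIntegrable c volume 0 s) (ht : IntervalIntegrable c volume 0 t) :
    modifiedCost K c t - modifiedCost K c s =
      (1 + s / K) * (c t - c s) + (1 / K) * ∫ x in s..t, (c t - c x) := by
  have hsplit : ∫ x in s..t, (c t - c x) =
      (t - s) * c t - ((∫ x in (0 : ℝ)..t, c x) - ∫ x in (0 : ℝ)..s, c x) := by
    rw [intervalIntegral.integral_sub intervalIntegrable_const (hs.symm.trans ht),
      intervalIntegral.integral_const, smul_eq_mul,
      intervalIntegral.integral_interval_sub_left ht hs]
  rw [hsplit, modifiedCost, modifiedCost]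
  ring

section Domain

variable {K : ℝ} {c : ℝ → ℝ} {D : Set ℝ}

theorem mul_sub_lt_modifiedCost_sub (hK : 0 < K) (hD : D.OrdConnected) (h0 : 0 ∈ D)
    (hmono : StrictMonoOn c D) {s t : ℝ} (hs : s ∈ D) (ht : t ∈ D) (hst : s ≠ t) :
    (1 + s / K) * (c t - c s) < modifiedCost K c t - modifiedCost K c s := by
  have hint : ∀ u ∈ D, IntervalIntegrable c volume 0 u := fun u hu =>
    (hmono.mono (hD.uIcc_subset h0 hu)).monotoneOn.intervalIntegrable
  have hpos : 0 < ∫ x in s..t, (c t - c x) :=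
    integral_sub_pos_of_strictMonoOn (hmono.mono (hD.uIcc_subset hs ht)) hst
  rw [modifiedCost_sub_modifiedCost K (hint s hs) (hint t ht)]
  exact lt_add_of_pos_right _ (mul_pos (one_div_pos.2 hK) hpos)

theorem one_add_div_nonneg_of_neg_le {s : ℝ} (hK : 0 < K) (hs : -K ≤ s) : 0 ≤ 1 + s / K := by
  have hdiv : -1 ≤ s / K := by rwa [le_div_iff₀ hK, neg_one_mul]
  linarith

theorem strictMonoOn_modifiedCost (hK : 0 < K) (hD : D.OrdConnected) (h0 : 0 ∈ D)
    (hDK : D ⊆ Ici (-K)) (hmono : StrictMonoOn c D) : StrictMonoOn (modifiedCost K c) D := by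
  intro s hs t ht hst
  have hweight : 0 ≤ (1 + s / K) * (c t - c s) :=
    mul_nonneg (one_add_div_nonneg_of_neg_le hK (hDK hs)) (sub_pos.2 (hmono hs ht hst)).le
  exact sub_pos.1
    (hweight.trans_lt (mul_sub_lt_modifiedCost_sub hK hD h0 hmono hs ht hst.ne))

theorem strictConvexOn_modifiedCost (hK : 0 < K) (h0 : 0 ∈ D) (hDK : D ⊆ Ici (-K))
    (hconv : ConvexOn ℝ D c) (hmono : StrictMonoOn c D) :
    StrictConvexOn ℝ D (modifiedCost K c) := by
  refine ⟨hconv.1, fun x hx y hy hxy a b ha hb hab => ?_⟩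
  have hc : c (a • x + b • y) ≤ a • c x + b • c y := hconv.2 hx hy ha.le hb.le hab
  have hsD : a • x + b • y ∈ D := hconv.1 hx hy ha.le hb.le hab
  simp only [smul_eq_mul] at hc hsD ⊢
  obtain rfl : a = 1 - b := eq_sub_of_add_eq hab
  set s := (1 - b) * x + b * y with hs
  have hsx : s ≠ x := by
    rw [← sub_ne_zero, show s - x = b * (y - x) by rw [hs]; ring]
    exact mul_ne_zero hb.ne' (sub_ne_zero.2 hxy.symm)
  have hsy : s ≠ y := by
    rw [← sub_ne_zero, show s - y = (1 - b) * (x - y) by rw [hs]; ring]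
    exact mul_ne_zero ha.ne' (sub_ne_zero.2 hxy)
  have hincr_x := mul_sub_lt_modifiedCost_sub hK hconv.1.ordConnected h0 hmono hsD hx hsx
  have hincr_y := mul_sub_lt_modifiedCost_sub hK hconv.1.ordConnected h0 hmono hsD hy hsy
  rw [← sub_pos]
  calc
    0 ≤ (1 + s / K) * ((1 - b) * c x + b * c y - c s) :=
      mul_nonneg (one_add_div_nonneg_of_neg_le hK (hDK hsD)) (sub_nonneg.2 hc)
    _ = (1 - b) * ((1 + s / K) * (c x - c s)) + b * ((1 + s / K) * (c y - c s)) := by ring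
    _ < (1 - b) * (modifiedCost K c x - modifiedCost K c s) +
        b * (modifiedCost K c y - modifiedCost K c s) := by gcongr
    _ = (1 - b) * modifiedCost K c x + b * modifiedCost K c y - modifiedCost K c s := by ring

theorem modified_cost_strictConvex_strictMono_general (hK : 0 < K) (h0 : 0 ∈ D)
    (hDK : D ⊆ Ici (-K)) (hconv : ConvexOn ℝ D c) (hmono : StrictMonoOn c D) :
    StrictConvexOn ℝ D (modifiedCost K c) ∧ StrictMonoOn (modifiedCost K c) D :=
  ⟨strictConvexOn_modifiedCost hK h0 hDK hconv hmono,
    strictMonoOn_modifiedCost hK hconv.1.ordConnected h0 hDK hmono⟩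

end Domain

/-- If `c` is convex, strictly increasing and differentiable on `[0, ∞)`, then the modified cost
`ĉ(s) = (1 + s/K)·c(s) − (1/K)·∫₀^s c(x) dx` is strictly convex and strictly increasing
on `[0, ∞)`. -/
theorem modified_cost_strictConvex_strictMono
    (K : ℝ) (hK : 0 < K) (c : ℝ → ℝ)
    (hconv : ConvexOn ℝ (Set.Ici (0 : ℝ)) c)
    (hmono : StrictMonoOn c (Set.Ici (0 : ℝ)))
    (hdiff : DifferentiableOn ℝ c (Set.Ici (0 : ℝ)))
    (chat : ℝ → ℝ)
    (hchat : ∀ s, chat s = (1 + s / K) * c s - (1 / K) * ∫ x in (0:ℝ)..s, c x) :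
    StrictConvexOn ℝ (Set.Ici (0 : ℝ)) chat ∧ StrictMonoOn chat (Set.Ici (0 : ℝ)) := by
  obtain rfl : chat = modifiedCost K c := funext hchat
  exact modified_cost_strictConvex_strictMono_general hK self_mem_Ici
    (Ici_subset_Ici.2 (neg_nonpos.2 hK.le)) hconv hmono
end

section
/- Let D > 0, W > 0, let N ≥ 3 be an integer, and let c : ℝ → ℝ be convex and strictly increasing. Define S(w) = D − w·(N−1)·D/(w + W) and u(w) = (w + W)/(N−1) − w − c(S(w)). Then u is strictly concave on [0, ∞). -/
/-!
Writing `k = N - 1`, the dispatch is `S(w) = D - kD + kDW / (w + W)`, an increasing affine function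
of the strictly convex `1 / (w + W)`. Hence `c ∘ S` is strictly convex, and the profit differs
from `-c ∘ S` by the affine function `(w + W) / k - w`.
-/

open Set

section Composition

variable {𝕜 E β γ : Type*} [Semiring 𝕜] [PartialOrder 𝕜] [AddCommMonoid E] [AddCommMonoid β]
  [PartialOrder β] [AddCommMonoid γ] [PartialOrder γ] [SMul 𝕜 E] [SMul 𝕜 β] [SMul 𝕜 γ]

/-- `ConvexOn.comp_strictConvexOn` is the case `t = f '' s`. -/
theorem strictConvexOn_comp_of_mapsTo {s : Set E} {t : Set β} {f : E → β} {g : β → γ}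
    (hg : ConvexOn 𝕜 t g) (hg_mono : StrictMonoOn g t) (hf : StrictConvexOn 𝕜 s f)
    (hst : MapsTo f s t) : StrictConvexOn 𝕜 s (fun x => g (f x)) := by
  refine ⟨hf.1, fun x hx y hy hxy a b ha hb hab => ?_⟩
  have hfx := hst hx
  have hfy := hst hy
  calc
    g (f (a • x + b • y)) < g (a • f x + b • f y) :=
      hg_mono (hst (hf.1 hx hy ha.le hb.le hab)) (hg.1 hfx hfy ha.le hb.le hab)
        (hf.2 hx hy hxy ha hb hab)
    _ ≤ a • g (f x) + b • g (f y) := hg.2 hfx hfy ha.le hb.le hab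

end Composition

theorem strictConvexOn_inv_add (W : ℝ) :
    StrictConvexOn ℝ (Ioi (-W)) (fun w => (w + W)⁻¹) := by
  have inv_strictConvexOn : StrictConvexOn ℝ (Ioi 0) (fun x : ℝ => x⁻¹) := by
    simpa only [zpow_neg_one] using strictConvexOn_zpow (m := -1) (by decide) (by decide)
  simpa [Function.comp_def, neg_lt_iff_pos_add] using inv_strictConvexOn.translate_left W

/-- The quantity `S(w)` supplied by a bidder bidding `w` against opposing total bid `W` under
demand `D`. The real parameter `k` stands for the number `N - 1` of competitors. At `w = -W` the
convention `x / 0 = 0` gives the value `D`. -/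
noncomputable def dispatch (D W k w : ℝ) : ℝ :=
  D - w * k * D / (w + W)

theorem dispatch_eq_mul_inv_add (D k : ℝ) {W w : ℝ} (hw : w + W ≠ 0) :
    dispatch D W k w = k * D * W * (w + W)⁻¹ + (D - k * D) := by
  unfold dispatch
  field_simp
  ring

theorem strictConvexOn_dispatch {D W k : ℝ} (hkDW : 0 < k * D * W) :
    StrictConvexOn ℝ (Ioi (-W)) (dispatch D W k) := by
  have affine_convex : ConvexOn ℝ univ (fun x => k * D * W * x + (D - k * D)) :=
    ((LinearMap.mulLeft ℝ (k * D * W)).convexOn convex_univ).add_const _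
  have affine_strictMono : StrictMono (fun x => k * D * W * x + (D - k * D)) :=
    (strictMono_mul_left_of_pos hkDW).add_const _
  refine (strictConvexOn_comp_of_mapsTo affine_convex (affine_strictMono.strictMonoOn univ)
    (strictConvexOn_inv_add W) (mapsTo_univ _ _)).congr fun w hw => ?_
  exact (dispatch_eq_mul_inv_add D k (neg_lt_iff_pos_add.mp hw).ne').symm

theorem concaveOn_add_div_sub {s : Set ℝ} (hs : Convex ℝ s) (W k : ℝ) :
    ConcaveOn ℝ s (fun w => (w + W) / k - w) := by
  have linear_add_const : ConcaveOn ℝ s (fun w => (k⁻¹ - 1) * w + W / k) :=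
    ((LinearMap.mulLeft ℝ (k⁻¹ - 1)).concaveOn hs).add_const _
  exact linear_add_const.congr fun w _ => by ring

theorem profit_strictConcaveOn_general {D W k : ℝ} (hkDW : 0 < k * D * W) {s t : Set ℝ}
    (hs : Convex ℝ s) (hsW : s ⊆ Ioi (-W)) (hst : MapsTo (dispatch D W k) s t)
    {c : ℝ → ℝ} (hconv : ConvexOn ℝ t c) (hmono : StrictMonoOn c t) :
    StrictConcaveOn ℝ s (fun w => (w + W) / k - w - c (dispatch D W k w)) :=
  have cost_strictConvexOn : StrictConvexOn ℝ s (fun w => c (dispatch D W k w)) :=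
    strictConvexOn_comp_of_mapsTo hconv hmono ((strictConvexOn_dispatch hkDW).subset hsW hs) hst
  (concaveOn_add_div_sub hs W k).sub_strictConvexOn cost_strictConvexOn

/-- Strict concavity of a supplier's profit in its own bid: with `N ≥ 3` suppliers, total
demand `D > 0`, opposing total bid `W > 0`, and a convex strictly increasing cost `c`, the
profit `u(w) = (w + W)/(N−1) − w − c(S(w))` with dispatch `S(w) = D − w·(N−1)·D/(w + W)` is
strictly concave on `[0, ∞)`. -/
theorem profit_strictConcaveOn
    (D W : ℝ) (hD : 0 < D) (hW : 0 < W) (N : ℕ) (hN : 3 ≤ N)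
    (c : ℝ → ℝ) (hconv : ConvexOn ℝ Set.univ c) (hmono : StrictMono c) :
    StrictConcaveOn ℝ (Set.Ici (0 : ℝ))
      (fun w => (w + W) / ((N : ℝ) - 1) - w
        - c (D - w * ((N : ℝ) - 1) * D / (w + W))) := by
  have hk : 0 < (N : ℝ) - 1 := sub_pos.mpr (Nat.one_lt_cast.mpr (by lia))
  exact profit_strictConcaveOn_general (by positivity) (convex_Ici 0)
    (Ici_subset_Ioi.mpr (neg_lt_zero.mpr hW)) (mapsTo_univ _ _) hconv (hmono.strictMonoOn univ)
end

section
/- Let E be a nonempty finite set (the edges of a cycle), and for each e ∈ E let f_e ≥ 0, B_e > 0 and p_e ∈ ℝ. Suppose |p_e| ≤ f_e for every e ∈ E and ∑_{e ∈ E} p_e / B_e = 0. Then for every e₀ ∈ E, |p_{e₀}| ≤ min{ f_{e₀}, B_{e₀} · ∑_{e ∈ E, e ≠ e₀} f_e / B_e }. -/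
theorem abs_le_sum_erase_abs_of_sum_eq_zero
    {ι G : Type*} [DecidableEq ι] [AddCommGroup G] [LinearOrder G] [IsOrderedAddMonoid G]
    {s : Finset ι} {x : ι → G} (hsum : ∑ i ∈ s, x i = 0) {a : ι} (ha : a ∈ s) :
    |x a| ≤ ∑ i ∈ s.erase a, |x i| := by
  have eq_neg_rest : x a = -∑ i ∈ s.erase a, x i :=
    eq_neg_of_add_eq_zero_left ((s.add_sum_erase x ha).trans hsum)
  rw [eq_neg_rest, abs_neg]
  exact Finset.abs_sum_le_sum_abs x (s.erase a)

theorem effective_flow_limit_general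
    {ι K : Type*} [DecidableEq ι] [Field K] [LinearOrder K] [IsStrictOrderedRing K]
    {E : Finset ι} {f B p : ι → K} (hB : ∀ e ∈ E, 0 < B e) (hp : ∀ e ∈ E, |p e| ≤ f e)
    (hcycle : ∑ e ∈ E, p e / B e = 0) {e₀ : ι} (he₀ : e₀ ∈ E) :
    |p e₀| ≤ min (f e₀) (B e₀ * ∑ e ∈ E.erase e₀, f e / B e) := by
  have abs_angle {e : ι} (he : e ∈ E) : |p e / B e| = |p e| / B e := by
    rw [abs_div, abs_of_pos (hB e he)]
  have abs_angle_le {e : ι} (he : e ∈ E) : |p e / B e| ≤ f e / B e :=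
    (abs_angle he).trans_le (div_le_div_of_nonneg_right (hp e he) (hB e he).le)
  have sum_bound : |p e₀| / B e₀ ≤ ∑ e ∈ E.erase e₀, f e / B e :=
    calc |p e₀| / B e₀ = |p e₀ / B e₀| := (abs_angle he₀).symm
      _ ≤ ∑ e ∈ E.erase e₀, |p e / B e| := abs_le_sum_erase_abs_of_sum_eq_zero hcycle he₀
      _ ≤ ∑ e ∈ E.erase e₀, f e / B e :=
        Finset.sum_le_sum fun _ he => abs_angle_le (Finset.mem_of_mem_erase he)
  exact le_min (hp e₀ he₀) ((div_le_iff₀' (hB e₀ he₀)).mp sum_bound)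

/-- Effective flow limit lemma: if on the edges of a cycle the flows satisfy the flow-limit
constraints `|p e| ≤ f e` and the voltage-angle constraint `∑ e, p e / B e = 0` (with
admittances `B e > 0`), then for every edge `e₀` of the cycle,
`|p e₀| ≤ min (f e₀) (B e₀ · ∑_{e ≠ e₀} f e / B e)`. -/
theorem effective_flow_limit
    {ι : Type*} [DecidableEq ι] (E : Finset ι) (hE : E.Nonempty)
    (f B p : ι → ℝ)
    (hf : ∀ e ∈ E, 0 ≤ f e) (hB : ∀ e ∈ E, 0 < B e)
    (hp : ∀ e ∈ E, |p e| ≤ f e)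
    (hcycle : ∑ e ∈ E, p e / B e = 0) :
    ∀ e₀ ∈ E, |p e₀| ≤ min (f e₀) (B e₀ * ∑ e ∈ E.erase e₀, f e / B e) :=
  fun _ he₀ => effective_flow_limit_general hB hp hcycle he₀
end
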